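/- arXiv:1810.01324 — 3 statements merged into one kernel-verified Lean document; each statement's English description precedes it below -/
import Mathlib

section
/- For every smooth function f : ℝ^d × ℝ^d → ℝ and every point (x,v), one has the pointwise lower bound Γ₂(f)(x,v) ≥ ‖∇_x f(x,v)‖² − (14 + 8M² + 2M)‖∇_v f(x,v)‖². -/
/-!
Since `2|p|² - 2 p·q + 2|q|² = |p|² + |q|² + |p - q|²`, the form `Γ(f, g)` is a sum of products
`∂_w f ∂_w g` over the constant directions `w = (eᵢ, 0), (0, eᵢ), (eᵢ, -eᵢ)`. For a generator
`L = ∑ⱼ ∂_{eⱼ}² + b·∇` whose second-order part also has constant directions, `∂_w` commutes with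
`L` up to the first-order term `[∂_w, L] = ∂_{Db·w}`, and Bochner's computation gives
`Γ₂(f) = 2 ∑_w ∑ⱼ (∂_{eⱼ} ∂_w f)² - 2 ∑_w ∂_w f ∂_{Db·w} f`. Dropping the squares leaves a quadratic
form in `p = ∇_x f`, `q = ∇_v f` and `Hess U`; Cauchy–Schwarz and completing the square finish.
-/

open scoped RealInnerProductSpace

noncomputable section

/-- The gradient in the `x` (position) variable of a function on `ℝ^d × ℝ^d`. -/
def gradx {d : ℕ} (f : EuclideanSpace ℝ (Fin d) × EuclideanSpace ℝ (Fin d) → ℝ)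
    (z : EuclideanSpace ℝ (Fin d) × EuclideanSpace ℝ (Fin d)) : EuclideanSpace ℝ (Fin d) :=
  gradient (fun x => f (x, z.2)) z.1

/-- The gradient in the `v` (velocity) variable of a function on `ℝ^d × ℝ^d`. -/
def gradv {d : ℕ} (f : EuclideanSpace ℝ (Fin d) × EuclideanSpace ℝ (Fin d) → ℝ)
    (z : EuclideanSpace ℝ (Fin d) × EuclideanSpace ℝ (Fin d)) : EuclideanSpace ℝ (Fin d) :=
  gradient (fun v => f (z.1, v)) z.2

/-- The Laplacian in the `v` (velocity) variable of a function on `ℝ^d × ℝ^d`. -/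
def lapv {d : ℕ} (f : EuclideanSpace ℝ (Fin d) × EuclideanSpace ℝ (Fin d) → ℝ)
    (z : EuclideanSpace ℝ (Fin d) × EuclideanSpace ℝ (Fin d)) : ℝ :=
  ∑ i : Fin d,
    fderiv ℝ (fun v => fderiv ℝ (fun v' => f (z.1, v')) v (EuclideanSpace.single i 1)) z.2
      (EuclideanSpace.single i 1)

/-- The kinetic Fokker–Planck generator
`L f = Δ_v f + v·∇_x f − v·∇_v f − ∇_x U(x)·∇_v f`. -/
def genL {d : ℕ} (U : EuclideanSpace ℝ (Fin d) → ℝ)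
    (f : EuclideanSpace ℝ (Fin d) × EuclideanSpace ℝ (Fin d) → ℝ)
    (z : EuclideanSpace ℝ (Fin d) × EuclideanSpace ℝ (Fin d)) : ℝ :=
  lapv f z + ⟪z.2, gradx f z⟫ - ⟪z.2, gradv f z⟫ - ⟪gradient U z.1, gradv f z⟫

/-- The carré du champ
`Γ(f,g) = 2 ∇_x f·∇_x g − ∇_x f·∇_v g − ∇_v f·∇_x g + 2 ∇_v f·∇_v g`. -/
def carre {d : ℕ} (f g : EuclideanSpace ℝ (Fin d) × EuclideanSpace ℝ (Fin d) → ℝ)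
    (z : EuclideanSpace ℝ (Fin d) × EuclideanSpace ℝ (Fin d)) : ℝ :=
  2 * ⟪gradx f z, gradx g z⟫ - ⟪gradx f z, gradv g z⟫ - ⟪gradv f z, gradx g z⟫
    + 2 * ⟪gradv f z, gradv g z⟫

/-- `Γ₂(f) = L Γ(f,f) − 2 Γ(f, L f)`. -/
def carre2 {d : ℕ} (U : EuclideanSpace ℝ (Fin d) → ℝ)
    (f : EuclideanSpace ℝ (Fin d) × EuclideanSpace ℝ (Fin d) → ℝ)
    (z : EuclideanSpace ℝ (Fin d) × EuclideanSpace ℝ (Fin d)) : ℝ :=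
  genL U (carre f f) z - 2 * carre f (genL U f) z

section DiffusionGenerator

variable {F ι κ : Type*} [NormedAddCommGroup F] [NormedSpace ℝ F] [Fintype ι] [Fintype κ]

/-- The directional derivative `∂_w g`, as an operator on functions. It is taken to be `Dg(z) w`
rather than Mathlib's `lineDeriv`, which makes it linear in `w` for every `g`. -/
def dirDeriv (w : F) (g : F → ℝ) (z : F) : ℝ := fderiv ℝ g z w

/-- The second-order operator `L g = ∑ⱼ ∂_{e j}² g + b·∇g` with constant diffusion directions `e j`
and drift vector field `b`. -/
def diffusionGen (e : ι → F) (b : F → F) (g : F → ℝ) (z : F) : ℝ :=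
  ∑ j, dirDeriv (e j) (dirDeriv (e j) g) z + dirDeriv (b z) g z

/-- The carré du champ `Γ(f, g) = ∑ₖ ∂_{w k} f ∂_{w k} g` of a family of constant directions. It is
not tied to the diffusion directions of a generator. -/
def dirCarre (w : κ → F) (f g : F → ℝ) (z : F) : ℝ :=
  ∑ k, dirDeriv (w k) f z * dirDeriv (w k) g z

theorem contDiff_dirDeriv {m n : WithTop ℕ∞} {g : F → ℝ} (hg : ContDiff ℝ n g) (hmn : m + 1 ≤ n)
    (w : F) : ContDiff ℝ m (dirDeriv w g) :=
  (hg.fderiv_right hmn).clm_apply contDiff_const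

theorem dirDeriv_dirDeriv_eq_fderiv_fderiv {g : F → ℝ} (hg : ContDiff ℝ 2 g) (u w z : F) :
    dirDeriv u (dirDeriv w g) z = fderiv ℝ (fderiv ℝ g) z u w := by
  have hfderiv : DifferentiableAt ℝ (fderiv ℝ g) z :=
    (hg.fderiv_right (m := 1) (by norm_num)).differentiable one_ne_zero z
  unfold dirDeriv
  simp [fderiv_clm_apply hfderiv (differentiableAt_const w)]

theorem dirDeriv_comm {g : F → ℝ} (hg : ContDiff ℝ 2 g) (u w : F) :
    dirDeriv u (dirDeriv w g) = dirDeriv w (dirDeriv u g) := by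
  funext z
  rw [dirDeriv_dirDeriv_eq_fderiv_fderiv hg, dirDeriv_dirDeriv_eq_fderiv_fderiv hg]
  exact (hg.contDiffAt.isSymmSndFDerivAt (by simp)).eq u w

theorem dirDeriv_fun_add {g h : F → ℝ} {z : F} (hg : DifferentiableAt ℝ g z)
    (hh : DifferentiableAt ℝ h z) (w : F) :
    dirDeriv w (fun y => g y + h y) z = dirDeriv w g z + dirDeriv w h z := by
  simp [dirDeriv, fderiv_fun_add hg hh]

theorem dirDeriv_fun_mul {g h : F → ℝ} {z : F} (hg : DifferentiableAt ℝ g z)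
    (hh : DifferentiableAt ℝ h z) (w : F) :
    dirDeriv w (fun y => g y * h y) z = g z * dirDeriv w h z + h z * dirDeriv w g z := by
  simp [dirDeriv, fderiv_fun_mul hg hh]

theorem dirDeriv_fun_sum {g : κ → F → ℝ} {z : F} (hg : ∀ k, DifferentiableAt ℝ (g k) z) (w : F) :
    dirDeriv w (fun y => ∑ k, g k y) z = ∑ k, dirDeriv w (g k) z := by
  simp [dirDeriv, fderiv_fun_sum fun k _ => hg k]

theorem dirDeriv_dirDeriv_fun_mul {g h : F → ℝ} (hg : ContDiff ℝ 2 g) (hh : ContDiff ℝ 2 h)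
    (w z : F) :
    dirDeriv w (dirDeriv w fun y => g y * h y) z
      = g z * dirDeriv w (dirDeriv w h) z + h z * dirDeriv w (dirDeriv w g) z
        + 2 * (dirDeriv w g z * dirDeriv w h z) := by
  have hg₀ : Differentiable ℝ g := hg.differentiable two_ne_zero
  have hh₀ : Differentiable ℝ h := hh.differentiable two_ne_zero
  have hg₁ : Differentiable ℝ (dirDeriv w g) :=
    (contDiff_dirDeriv (m := 1) hg (by norm_num) w).differentiable one_ne_zero
  have hh₁ : Differentiable ℝ (dirDeriv w h) :=
    (contDiff_dirDeriv (m := 1) hh (by norm_num) w).differentiable one_ne_zero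
  have hfirst : (dirDeriv w fun y => g y * h y)
      = fun y => g y * dirDeriv w h y + h y * dirDeriv w g y :=
    funext fun y => dirDeriv_fun_mul (hg₀ y) (hh₀ y) w
  rw [hfirst, dirDeriv_fun_add ((hg₀ z).fun_mul (hh₁ z)) ((hh₀ z).fun_mul (hg₁ z)),
    dirDeriv_fun_mul (hg₀ z) (hh₁ z), dirDeriv_fun_mul (hh₀ z) (hg₁ z)]
  ring

theorem diffusionGen_fun_mul (e : ι → F) (b : F → F) {g h : F → ℝ} (hg : ContDiff ℝ 2 g)
    (hh : ContDiff ℝ 2 h) (z : F) :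
    diffusionGen e b (fun y => g y * h y) z
      = g z * diffusionGen e b h z + h z * diffusionGen e b g z + 2 * dirCarre e g h z := by
  simp only [diffusionGen, dirCarre, dirDeriv_dirDeriv_fun_mul hg hh,
    dirDeriv_fun_mul (hg.differentiable two_ne_zero z) (hh.differentiable two_ne_zero z),
    Finset.sum_add_distrib, ← Finset.mul_sum]
  ring

theorem diffusionGen_fun_sum (e : ι → F) (b : F → F) {g : κ → F → ℝ}
    (hg : ∀ k, ContDiff ℝ 2 (g k)) (z : F) :
    diffusionGen e b (fun y => ∑ k, g k y) z = ∑ k, diffusionGen e b (g k) z := by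
  have hg₀ : ∀ y k, DifferentiableAt ℝ (g k) y := fun y k => (hg k).differentiable two_ne_zero y
  have hfirst : ∀ w, (dirDeriv w fun y => ∑ k, g k y) = fun y => ∑ k, dirDeriv w (g k) y :=
    fun w => funext fun y => dirDeriv_fun_sum (hg₀ y) w
  have hsecond : ∀ w, dirDeriv w (fun y => ∑ k, dirDeriv w (g k) y) z
      = ∑ k, dirDeriv w (dirDeriv w (g k)) z := fun w =>
    dirDeriv_fun_sum (fun k =>
      (contDiff_dirDeriv (m := 1) (hg k) (by norm_num) w).differentiable one_ne_zero z) w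
  simp only [diffusionGen, hfirst, hsecond, Finset.sum_add_distrib]
  rw [Finset.sum_comm]

theorem contDiff_dirCarre (w : κ → F) {m n : WithTop ℕ∞} {f g : F → ℝ} (hf : ContDiff ℝ n f)
    (hg : ContDiff ℝ n g) (hmn : m + 1 ≤ n) : ContDiff ℝ m (dirCarre w f g) :=
  ContDiff.sum fun k _ => (contDiff_dirDeriv hf hmn (w k)).mul (contDiff_dirDeriv hg hmn (w k))

theorem hasFDerivAt_diffusionGen (e : ι → F) {b : F → F} {g : F → ℝ} {z : F}
    (hg : ContDiff ℝ 3 g) (hb : DifferentiableAt ℝ b z) :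
    HasFDerivAt (diffusionGen e b g)
      (∑ j, fderiv ℝ (dirDeriv (e j) (dirDeriv (e j) g)) z
        + ((fderiv ℝ g z).comp (fderiv ℝ b z) + (fderiv ℝ (fderiv ℝ g) z).flip (b z))) z := by
  have hsecond : ∀ j, ContDiff ℝ 1 (dirDeriv (e j) (dirDeriv (e j) g)) := fun j =>
    contDiff_dirDeriv (contDiff_dirDeriv (m := 2) hg (by norm_num) _) (by norm_num) _
  have hfderiv : ContDiff ℝ 2 (fderiv ℝ g) := hg.fderiv_right (by norm_num)
  exact (HasFDerivAt.fun_sum fun j _ =>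
      ((hsecond j).differentiable one_ne_zero z).hasFDerivAt).add
    ((hfderiv.differentiable two_ne_zero z).hasFDerivAt.clm_apply hb.hasFDerivAt)

theorem dirDeriv_diffusionGen (e : ι → F) {b : F → F} {g : F → ℝ} {z : F} (hg : ContDiff ℝ 3 g)
    (hb : DifferentiableAt ℝ b z) (w : F) :
    dirDeriv w (diffusionGen e b g) z
      = diffusionGen e b (dirDeriv w g) z + dirDeriv (fderiv ℝ b z w) g z := by
  have hg₂ : ContDiff ℝ 2 g := hg.of_le (by norm_num)
  have hthird : ∀ u, fderiv ℝ (dirDeriv u (dirDeriv u g)) z w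
      = dirDeriv u (dirDeriv u (dirDeriv w g)) z := fun u => by
    rw [dirDeriv_comm hg₂ u w, dirDeriv_comm (contDiff_dirDeriv hg (by norm_num) u) u w]
    rfl
  have hdrift : fderiv ℝ (fderiv ℝ g) z w (b z) = dirDeriv (b z) (dirDeriv w g) z := by
    rw [dirDeriv_comm hg₂, dirDeriv_dirDeriv_eq_fderiv_fderiv hg₂]
  rw [dirDeriv, (hasFDerivAt_diffusionGen e hg hb).fderiv]
  simp only [add_apply, sum_apply, hthird, dirDeriv, ContinuousLinearMap.comp_apply,
    ContinuousLinearMap.flip_apply, hdrift, diffusionGen]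
  ring

theorem diffusionGen_dirCarre_sub (e : ι → F) (w : κ → F) {b : F → F} {f : F → ℝ} {z : F}
    (hf : ContDiff ℝ 3 f) (hb : DifferentiableAt ℝ b z) :
    diffusionGen e b (dirCarre w f f) z - 2 * dirCarre w f (diffusionGen e b f) z
      = 2 * ∑ k, dirCarre e (dirDeriv (w k) f) (dirDeriv (w k) f) z
        - 2 * ∑ k, dirDeriv (w k) f z * dirDeriv (fderiv ℝ b z (w k)) f z := by
  have hw : ∀ k, ContDiff ℝ 2 (dirDeriv (w k) f) := fun k =>
    contDiff_dirDeriv hf (by norm_num) _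
  unfold dirCarre
  rw [diffusionGen_fun_sum e b fun k => (hw k).mul (hw k)]
  simp only [diffusionGen_fun_mul e b (hw _) (hw _), dirDeriv_diffusionGen e hf hb,
    dirCarre, Finset.mul_sum, ← Finset.sum_sub_distrib]
  refine Finset.sum_congr rfl fun k _ => ?_
  ring

theorem dirCarre_self_nonneg (w : κ → F) (f : F → ℝ) (z : F) : 0 ≤ dirCarre w f f z :=
  Finset.sum_nonneg fun _ _ => mul_self_nonneg _

theorem neg_two_mul_sum_le_diffusionGen_dirCarre_sub (e : ι → F) (w : κ → F) {b : F → F}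
    {f : F → ℝ} {z : F} (hf : ContDiff ℝ 3 f) (hb : DifferentiableAt ℝ b z) :
    -2 * ∑ k, dirDeriv (w k) f z * dirDeriv (fderiv ℝ b z (w k)) f z
      ≤ diffusionGen e b (dirCarre w f f) z - 2 * dirCarre w f (diffusionGen e b f) z := by
  have hsquares : 0 ≤ ∑ k, dirCarre e (dirDeriv (w k) f) (dirDeriv (w k) f) z :=
    Finset.sum_nonneg fun k _ => dirCarre_self_nonneg e _ z
  rw [diffusionGen_dirCarre_sub e w hf hb]
  linarith

end DiffusionGenerator

section InnerProductSpace

variable {H : Type*} [NormedAddCommGroup H] [InnerProductSpace ℝ H]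

theorem sum_inner_mul_map_orthonormalBasis {ι : Type*} [Fintype ι] (B : OrthonormalBasis ι ℝ H)
    (a : H) (ℓ : H →L[ℝ] ℝ) :
    ∑ i, ⟪a, B i⟫ * ℓ (B i) = ℓ a := by
  conv_rhs => rw [← B.sum_repr' a]
  simp [real_inner_comm]

theorem abs_inner_clm_apply_le {W : Type*} [NormedAddCommGroup W] [NormedSpace ℝ W]
    {A : W →L[ℝ] H} {M : ℝ} (hA : ‖A‖ ≤ M) (u : H) (w : W) :
    |⟪u, A w⟫| ≤ M * ‖w‖ * ‖u‖ :=
  calc |⟪u, A w⟫| ≤ ‖u‖ * ‖A w‖ := abs_real_inner_le_norm u (A w)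
    _ ≤ ‖u‖ * (M * ‖w‖) := by gcongr; exact A.le_of_opNorm_le hA w
    _ = M * ‖w‖ * ‖u‖ := mul_comm _ _

theorem differentiableAt_gradient [CompleteSpace H] {U : H → ℝ} {x : H} (hU : ContDiffAt ℝ 2 U x) :
    DifferentiableAt ℝ (gradient U) x :=
  (InnerProductSpace.toDual ℝ H).symm.differentiable.differentiableAt.comp x
    ((hU.fderiv_right (m := 1) (by norm_num)).differentiableAt one_ne_zero)

end InnerProductSpace

section PartialDerivatives

variable {E F G : Type*} [NormedAddCommGroup E] [NormedSpace ℝ E] [NormedAddCommGroup F]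
  [NormedSpace ℝ F] [NormedAddCommGroup G] [NormedSpace ℝ G] {g : E × F → G} {x : E} {y : F}

theorem fderiv_comp_prodMk_left (hg : DifferentiableAt ℝ g (x, y)) (w : E) :
    fderiv ℝ (fun x' => g (x', y)) x w = fderiv ℝ g (x, y) (w, 0) := by
  have hcomp := HasFDerivAt.comp (f := fun x' => (x', y)) x hg.hasFDerivAt
    (hasFDerivAt_prodMk_left x y)
  simpa [Function.comp_def] using DFunLike.congr_fun hcomp.fderiv w

theorem fderiv_comp_prodMk_right (hg : DifferentiableAt ℝ g (x, y)) (w : F) :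
    fderiv ℝ (fun y' => g (x, y')) y w = fderiv ℝ g (x, y) (0, w) := by
  have hcomp := HasFDerivAt.comp (f := fun y' => (x, y')) y hg.hasFDerivAt
    (hasFDerivAt_prodMk_right x y)
  simpa [Function.comp_def] using DFunLike.congr_fun hcomp.fderiv w

end PartialDerivatives

section PartialGradients

variable {d : ℕ} {g : EuclideanSpace ℝ (Fin d) × EuclideanSpace ℝ (Fin d) → ℝ}
  {z : EuclideanSpace ℝ (Fin d) × EuclideanSpace ℝ (Fin d)}

theorem inner_gradx_left (hg : DifferentiableAt ℝ g z) (w : EuclideanSpace ℝ (Fin d)) :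
    ⟪gradx g z, w⟫ = fderiv ℝ g z (w, 0) := by
  rw [gradx, inner_gradient_left, fderiv_comp_prodMk_left hg]

theorem inner_gradv_left (hg : DifferentiableAt ℝ g z) (w : EuclideanSpace ℝ (Fin d)) :
    ⟪gradv g z, w⟫ = fderiv ℝ g z (0, w) := by
  rw [gradv, inner_gradient_left, fderiv_comp_prodMk_right hg]

theorem dirDeriv_eq_inner_gradx_add_inner_gradv (hg : DifferentiableAt ℝ g z)
    (w : EuclideanSpace ℝ (Fin d) × EuclideanSpace ℝ (Fin d)) :
    dirDeriv w g z = ⟪gradx g z, w.1⟫ + ⟪gradv g z, w.2⟫ := by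
  rw [inner_gradx_left hg, inner_gradv_left hg, ← map_add]
  simp [dirDeriv]

end PartialGradients

section KineticFokkerPlanck

variable {d : ℕ}

local notation "E" => EuclideanSpace ℝ (Fin d)

/-- The unit vectors `(0, eᵢ)` of the velocity variable, the diffusion directions of `genL`. -/
def velocityDir (i : Fin d) : E × E := (0, EuclideanSpace.single i 1)

/-- The drift vector field `(x, v) ↦ (v, -v - ∇U(x))` of `genL`. -/
def kineticDrift (U : E → ℝ) (z : E × E) : E × E := (z.2, -z.2 - gradient U z.1)

/-- The `3d` directions `(eᵢ, 0)`, `(0, eᵢ)` and `(eᵢ, -eᵢ)`, whose squared directional derivatives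
sum to the form `carre`. -/
def carreDir : Fin d ⊕ Fin d ⊕ Fin d → E × E :=
  Sum.elim (fun i => (EuclideanSpace.single i 1, 0)) <|
    Sum.elim velocityDir fun i => (EuclideanSpace.single i 1, -EuclideanSpace.single i 1)

theorem lapv_eq_sum_dirDeriv_dirDeriv {g : E × E → ℝ} (hg : ContDiff ℝ 2 g) (z : E × E) :
    lapv g z = ∑ i, dirDeriv (velocityDir i) (dirDeriv (velocityDir i) g) z := by
  have hfirst : ∀ i : Fin d,
      (fun v => fderiv ℝ (fun v' => g (z.1, v')) v (EuclideanSpace.single i 1))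
        = fun v => dirDeriv (velocityDir i) g (z.1, v) := fun i =>
    funext fun v => fderiv_comp_prodMk_right (hg.differentiable two_ne_zero _) _
  refine Finset.sum_congr rfl fun i _ => ?_
  rw [hfirst]
  exact fderiv_comp_prodMk_right
    ((contDiff_dirDeriv (m := 1) hg (by norm_num) _).differentiable one_ne_zero _) _

theorem genL_eq_diffusionGen (U : E → ℝ) {g : E × E → ℝ} (hg : ContDiff ℝ 2 g) :
    genL U g = diffusionGen velocityDir (kineticDrift U) g := by
  funext z
  rw [genL, diffusionGen, lapv_eq_sum_dirDeriv_dirDeriv hg,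
    dirDeriv_eq_inner_gradx_add_inner_gradv (hg.differentiable two_ne_zero z)]
  simp only [kineticDrift, inner_sub_right, inner_neg_right, real_inner_comm (gradx g z),
    real_inner_comm (gradv g z)]
  ring

theorem sum_dirDeriv_carreDir_mul {f : E × E → ℝ} {z : E × E} (hf : DifferentiableAt ℝ f z)
    (ℓ : E × E →L[ℝ] ℝ) :
    ∑ k, dirDeriv (carreDir k) f z * ℓ (carreDir k)
      = ℓ ((2 : ℝ) • gradx f z - gradv f z, (2 : ℝ) • gradv f z - gradx f z) := by
  set p := gradx f z
  set q := gradv f z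
  have hbasis : ∀ (a : E) (ℓ' : E →L[ℝ] ℝ),
      ∑ i, ⟪a, EuclideanSpace.single i 1⟫ * ℓ' (EuclideanSpace.single i 1) = ℓ' a := fun a ℓ' => by
    simpa only [EuclideanSpace.basisFun_apply] using
      sum_inner_mul_map_orthonormalBasis (EuclideanSpace.basisFun (Fin d) ℝ) a ℓ'
  have hdir := dirDeriv_eq_inner_gradx_add_inner_gradv hf
  have hx : ∑ i, dirDeriv (EuclideanSpace.single i 1, (0 : E)) f z
      * ℓ (EuclideanSpace.single i 1, 0) = ℓ (p, 0) := by
    simpa [hdir] using hbasis p (ℓ.comp (.inl ℝ E E))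
  have hv : ∑ i, dirDeriv (velocityDir i) f z * ℓ (velocityDir i) = ℓ (0, q) := by
    simpa [hdir, velocityDir] using hbasis q (ℓ.comp (.inr ℝ E E))
  have hxv : ∑ i, dirDeriv ((EuclideanSpace.single i 1, -EuclideanSpace.single i 1) : E × E) f z
      * ℓ (EuclideanSpace.single i 1, -EuclideanSpace.single i 1) = ℓ (p - q, -(p - q)) := by
    simpa [hdir, inner_sub_left, ← sub_eq_add_neg] using
      hbasis (p - q) (ℓ.comp ((ContinuousLinearMap.id ℝ E).prod (-.id ℝ E)))
  calc ∑ k, dirDeriv (carreDir k) f z * ℓ (carreDir k)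
      = ℓ (p, 0) + (ℓ (0, q) + ℓ (p - q, -(p - q))) := by
        rw [Fintype.sum_sum_type, Fintype.sum_sum_type, ← hx, ← hv, ← hxv]
        rfl
    _ = ℓ ((2 : ℝ) • p - q, (2 : ℝ) • q - p) := by
        rw [← map_add, ← map_add, Prod.mk_add_mk, Prod.mk_add_mk]
        congr 2 <;> module

theorem carre_eq_dirCarre {f g : E × E → ℝ} {z : E × E} (hf : DifferentiableAt ℝ f z)
    (hg : DifferentiableAt ℝ g z) : carre f g z = dirCarre carreDir f g z := by
  have hsum : dirCarre carreDir f g z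
      = dirDeriv ((2 : ℝ) • gradx f z - gradv f z, (2 : ℝ) • gradv f z - gradx f z) g z :=
    sum_dirDeriv_carreDir_mul hf (fderiv ℝ g z)
  rw [hsum, dirDeriv_eq_inner_gradx_add_inner_gradv hg]
  simp only [carre, inner_sub_right, real_inner_smul_right, real_inner_comm (gradx f z),
    real_inner_comm (gradv f z)]
  ring

theorem hasFDerivAt_kineticDrift {U : E → ℝ} {z : E × E}
    (hU : DifferentiableAt ℝ (gradient U) z.1) :
    HasFDerivAt (kineticDrift U)
      ((ContinuousLinearMap.snd ℝ E E).prod (-ContinuousLinearMap.snd ℝ E E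
        - (fderiv ℝ (gradient U) z.1).comp (ContinuousLinearMap.fst ℝ E E))) z :=
  hasFDerivAt_snd.prodMk (hasFDerivAt_snd.neg.sub (hU.hasFDerivAt.comp z hasFDerivAt_fst))

theorem carre2_eq_diffusionGen_dirCarre_sub {U : E → ℝ} {f : E × E → ℝ} {z : E × E}
    (hU : DifferentiableAt ℝ (gradient U) z.1) (hf : ContDiff ℝ 3 f) :
    carre2 U f z = diffusionGen velocityDir (kineticDrift U) (dirCarre carreDir f f) z
      - 2 * dirCarre carreDir f (diffusionGen velocityDir (kineticDrift U) f) z := by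
  have hf₀ : Differentiable ℝ f := hf.differentiable three_ne_zero
  have hcarre : carre f f = dirCarre carreDir f f :=
    funext fun y => carre_eq_dirCarre (hf₀ y) (hf₀ y)
  have hLf : DifferentiableAt ℝ (diffusionGen velocityDir (kineticDrift U) f) z :=
    (hasFDerivAt_diffusionGen _ hf
      (hasFDerivAt_kineticDrift hU).differentiableAt).differentiableAt
  rw [carre2, hcarre, genL_eq_diffusionGen U (contDiff_dirCarre _ hf hf (by norm_num)),
    genL_eq_diffusionGen U (hf.of_le (by norm_num)), carre_eq_dirCarre (hf₀ z) hLf]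

theorem sum_dirDeriv_carreDir_mul_dirDeriv_fderiv_kineticDrift {U : E → ℝ} {f : E × E → ℝ}
    {z : E × E} (hU : DifferentiableAt ℝ (gradient U) z.1) (hf : DifferentiableAt ℝ f z) :
    ∑ k, dirDeriv (carreDir k) f z * dirDeriv (fderiv ℝ (kineticDrift U) z (carreDir k)) f z
      = 3 * ⟪gradx f z, gradv f z⟫ - ‖gradx f z‖ ^ 2 - 2 * ‖gradv f z‖ ^ 2
        - 2 * ⟪gradv f z, fderiv ℝ (gradient U) z.1 (gradx f z)⟫
        + ⟪gradv f z, fderiv ℝ (gradient U) z.1 (gradv f z)⟫ := by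
  have hsum : ∑ k, dirDeriv (carreDir k) f z
      * dirDeriv (fderiv ℝ (kineticDrift U) z (carreDir k)) f z
      = dirDeriv (fderiv ℝ (kineticDrift U) z
          ((2 : ℝ) • gradx f z - gradv f z, (2 : ℝ) • gradv f z - gradx f z)) f z :=
    sum_dirDeriv_carreDir_mul hf ((fderiv ℝ f z).comp (fderiv ℝ (kineticDrift U) z))
  rw [hsum, dirDeriv_eq_inner_gradx_add_inner_gradv hf, (hasFDerivAt_kineticDrift hU).fderiv]
  simp only [ContinuousLinearMap.prod_apply, ContinuousLinearMap.coe_snd', sub_apply, neg_apply,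
    neg_sub, ContinuousLinearMap.comp_apply, ContinuousLinearMap.coe_fst', map_sub, map_smul,
    inner_sub_right, real_inner_smul_right, real_inner_self_eq_norm_sq,
    real_inner_comm (gradx f z)]
  ring

theorem quadraticForm_gradx_gradv_le_carre2 {U : E → ℝ} {f : E × E → ℝ} {z : E × E}
    (hU : DifferentiableAt ℝ (gradient U) z.1) (hf : ContDiff ℝ 3 f) :
    2 * ‖gradx f z‖ ^ 2 - 6 * ⟪gradx f z, gradv f z⟫ + 4 * ‖gradv f z‖ ^ 2
      + 4 * ⟪gradv f z, fderiv ℝ (gradient U) z.1 (gradx f z)⟫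
      - 2 * ⟪gradv f z, fderiv ℝ (gradient U) z.1 (gradv f z)⟫ ≤ carre2 U f z := by
  have hbochner := neg_two_mul_sum_le_diffusionGen_dirCarre_sub velocityDir carreDir hf
    (hasFDerivAt_kineticDrift hU).differentiableAt
  rw [sum_dirDeriv_carreDir_mul_dirDeriv_fderiv_kineticDrift hU
    (hf.differentiable three_ne_zero z)] at hbochner
  rw [carre2_eq_diffusionGen_dirCarre_sub hU hf]
  linarith

end KineticFokkerPlanck

theorem carre2_lower_bound_general {d : ℕ} {U : EuclideanSpace ℝ (Fin d) → ℝ} {M : ℝ}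
    {f : EuclideanSpace ℝ (Fin d) × EuclideanSpace ℝ (Fin d) → ℝ}
    {z : EuclideanSpace ℝ (Fin d) × EuclideanSpace ℝ (Fin d)} (hU : ContDiffAt ℝ 2 U z.1)
    (hHess : ‖fderiv ℝ (gradient U) z.1‖ ≤ M) (hf : ContDiff ℝ 3 f) :
    carre2 U f z ≥ ‖gradx f z‖ ^ 2 - (14 + 8 * M ^ 2 + 2 * M) * ‖gradv f z‖ ^ 2 := by
  have hcurvature := quadraticForm_gradx_gradv_le_carre2 (differentiableAt_gradient hU) hf
  have hinner : ⟪gradx f z, gradv f z⟫ ≤ ‖gradx f z‖ * ‖gradv f z‖ := real_inner_le_norm _ _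
  have hcross := (abs_le.1 (abs_inner_clm_apply_le hHess (gradv f z) (gradx f z))).1
  have hdiag := (abs_le.1 (abs_inner_clm_apply_le hHess (gradv f z) (gradv f z))).2
  calc ‖gradx f z‖ ^ 2 - (14 + 8 * M ^ 2 + 2 * M) * ‖gradv f z‖ ^ 2
      ≤ ‖gradx f z‖ ^ 2 - (14 + 8 * M ^ 2 + 2 * M) * ‖gradv f z‖ ^ 2
        + ((‖gradx f z‖ - (3 + 2 * M) * ‖gradv f z‖) ^ 2 + ((2 * M - 3) * ‖gradv f z‖) ^ 2) :=
        le_add_of_nonneg_right (by positivity)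
    _ = 2 * ‖gradx f z‖ ^ 2 - 6 * (‖gradx f z‖ * ‖gradv f z‖) + 4 * ‖gradv f z‖ ^ 2
        - 4 * (M * ‖gradx f z‖ * ‖gradv f z‖) - 2 * (M * ‖gradv f z‖ * ‖gradv f z‖) := by ring
    _ ≤ carre2 U f z := by linarith

/-- for every smooth `f` and every point `(x,v)`,
`Γ₂(f)(x,v) ≥ ‖∇_x f(x,v)‖² − (14 + 8M² + 2M)‖∇_v f(x,v)‖²`. -/
theorem carre2_lower_bound {d : ℕ} (hd : 1 ≤ d)
    (U : EuclideanSpace ℝ (Fin d) → ℝ) (hU : ContDiff ℝ (⊤ : ℕ∞) U)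
    (M : ℝ) (hM : 0 < M)
    (hHess : ∀ x : EuclideanSpace ℝ (Fin d), ‖fderiv ℝ (gradient U) x‖ ≤ M)
    (f : EuclideanSpace ℝ (Fin d) × EuclideanSpace ℝ (Fin d) → ℝ)
    (hf : ContDiff ℝ (⊤ : ℕ∞) f)
    (z : EuclideanSpace ℝ (Fin d) × EuclideanSpace ℝ (Fin d)) :
    carre2 U f z ≥ ‖gradx f z‖ ^ 2 - (14 + 8 * M ^ 2 + 2 * M) * ‖gradv f z‖ ^ 2 := by
  exact carre2_lower_bound_general (hU.of_le (WithTop.coe_le_coe.2 le_top)).contDiffAt (hHess z.1)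
    (hf.of_le (WithTop.coe_le_coe.2 le_top))

end
end

section
/- Set C_M = 15 + 8M² + 2M and define the modified bilinear form Γ̃(f,g) = Γ(f,g) + C_M f g, with Γ̃(f) = Γ̃(f,f). Then for every smooth function f : ℝ^d × ℝ^d → ℝ one has the pointwise inequality L Γ̃(f) − 2 Γ̃(f, L f) ≥ (1/3)(Γ̃(f) − C_M f²). -/
open scoped RealInnerProductSpace

noncomputable section

/-- The modified carré du champ `Γ̃(f,g) = Γ(f,g) + C_M f g` with `C_M = 15 + 8M² + 2M`. -/
def carreT {d : ℕ} (M : ℝ) (f g : EuclideanSpace ℝ (Fin d) × EuclideanSpace ℝ (Fin d) → ℝ)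
    (z : EuclideanSpace ℝ (Fin d) × EuclideanSpace ℝ (Fin d)) : ℝ :=
  carre f g z + (15 + 8 * M ^ 2 + 2 * M) * (f z * g z)

/-!
Since `2a² - 2ab + 2b² = a² + b² + (a - b)²`, the form `Γ(f)` is the sum of the squares `(D_w f)²`
over the constant fields `w = ∂_{x_i}`, `∂_{v_i}`, `∂_{x_i} - ∂_{v_i}`. Writing `L = Δ_v + X`, with
drift `X = (v, -v - ∇U(x))`, the diffusion part has constant coefficients, so `[D_w, L] = D_{DX w}`
and each square contributes
`L (D_w f)² - 2 D_w f · D_w (L f) = 2 |∇_v D_w f|² - 2 D_w f · D_{DX w} f`.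
The second-order terms are nonnegative. With `p = ∇_x f`, `q = ∇_v f`, `H = Hess U(x)`, what remains
is a quadratic form in `p` and `q` whose `p`-part is `2 |p|²`; the term `C_M f²` adds `2 C_M |q|²`,
and Young's inequality lets this absorb the cross terms `p·q`, `Hp·q` and the term `Hq·q`.
-/

namespace KineticFokkerPlanck

section SumOfSquares

variable {F : Type*} [NormedAddCommGroup F] [NormedSpace ℝ F]
  {ι κ : Type*} [Fintype ι] [Fintype κ]

/-- The derivative of `f` along the constant vector field `w`, as an operator on functions, so that
it can be iterated. -/
def dirDeriv (w : F) (f : F → ℝ) (z : F) : ℝ :=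
  fderiv ℝ f z w

/-- The bilinear form `∑ₖ (∂_{w k} f) (∂_{w k} g)` of a finite family of constant vector fields. -/
def sumSqForm (w : κ → F) (f g : F → ℝ) (z : F) : ℝ :=
  ∑ k, dirDeriv (w k) f z * dirDeriv (w k) g z

/-- The second-order operator `∑ᵢ ∂_{n i}² + X` in Hörmander form, with constant diffusion fields
`n i` and a variable drift `X`. -/
def sumSqOp (n : ι → F) (X : F → F) (f : F → ℝ) (z : F) : ℝ :=
  ∑ i, dirDeriv (n i) (dirDeriv (n i) f) z + dirDeriv (X z) f z

variable {f g : F → ℝ} {n : ι → F} {X : F → F} {z : F}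

lemma contDiff_dirDeriv {m k : WithTop ℕ∞} (hf : ContDiff ℝ k f) (hmk : m + 1 ≤ k) (w : F) :
    ContDiff ℝ m (dirDeriv w f) :=
  (hf.fderiv_right hmk).clm_apply contDiff_const

lemma differentiable_dirDeriv (hf : ContDiff ℝ 2 f) (w : F) : Differentiable ℝ (dirDeriv w f) :=
  (contDiff_dirDeriv (m := 1) hf (by norm_num) w).differentiable one_ne_zero

lemma dirDeriv_add (hf : Differentiable ℝ f) (hg : Differentiable ℝ g) (w : F) :
    dirDeriv w (f + g) = dirDeriv w f + dirDeriv w g := by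
  ext z
  simp [dirDeriv, fderiv_add (hf z) (hg z)]

lemma dirDeriv_const_smul (hf : Differentiable ℝ f) (c : ℝ) (w : F) :
    dirDeriv w (c • f) = c • dirDeriv w f := by
  ext z
  simp [dirDeriv, fderiv_const_smul (hf z)]

lemma dirDeriv_mul (hf : Differentiable ℝ f) (hg : Differentiable ℝ g) (w : F) :
    dirDeriv w (f * g) = f * dirDeriv w g + g * dirDeriv w f := by
  ext z
  simp [dirDeriv, fderiv_mul (hf z) (hg z)]

lemma dirDeriv_sum {h : κ → F → ℝ} (hh : ∀ k, Differentiable ℝ (h k)) (w : F) :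
    dirDeriv w (∑ k, h k) = ∑ k, dirDeriv w (h k) := by
  ext z
  simp [dirDeriv, fderiv_sum fun k _ => hh k z]

lemma dirDeriv_dirDeriv (hf : ContDiff ℝ 2 f) (w u z : F) :
    dirDeriv w (dirDeriv u f) z = fderiv ℝ (fderiv ℝ f) z w u := by
  have hdf : Differentiable ℝ (fderiv ℝ f) :=
    (hf.fderiv_right (m := 1) (by norm_num)).differentiable one_ne_zero
  have hu : fderiv ℝ (dirDeriv u f) z = (fderiv ℝ (fderiv ℝ f) z).flip u := by
    simpa using! fderiv_clm_apply (hdf z) (differentiableAt_const u)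
  simp [dirDeriv, hu]

lemma dirDeriv_comm (hf : ContDiff ℝ 2 f) (w u : F) :
    dirDeriv w (dirDeriv u f) = dirDeriv u (dirDeriv w f) := by
  ext z
  rw [dirDeriv_dirDeriv hf, dirDeriv_dirDeriv hf]
  exact hf.contDiffAt.isSymmSndFDerivAt (by simp) w u

lemma sumSqForm_self_nonneg (w : κ → F) (f : F → ℝ) (z : F) : 0 ≤ sumSqForm w f f z :=
  Finset.sum_nonneg fun _ _ => mul_self_nonneg _

lemma contDiff_sumSqForm_self {m k : WithTop ℕ∞} (hf : ContDiff ℝ k f) (hmk : m + 1 ≤ k)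
    (w : κ → F) : ContDiff ℝ m (sumSqForm w f f) :=
  ContDiff.sum fun _ _ => (contDiff_dirDeriv hf hmk _).mul (contDiff_dirDeriv hf hmk _)

lemma sumSqOp_add (hf : ContDiff ℝ 2 f) (hg : ContDiff ℝ 2 g) :
    sumSqOp n X (f + g) = sumSqOp n X f + sumSqOp n X g := by
  ext z
  simp only [sumSqOp, dirDeriv_add (hf.differentiable two_ne_zero) (hg.differentiable two_ne_zero),
    dirDeriv_add (differentiable_dirDeriv hf _) (differentiable_dirDeriv hg _), Pi.add_apply,
    Finset.sum_add_distrib]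
  ring

lemma sumSqOp_const_smul (hf : ContDiff ℝ 2 f) (c : ℝ) :
    sumSqOp n X (c • f) = c • sumSqOp n X f := by
  ext z
  simp only [sumSqOp, dirDeriv_const_smul (hf.differentiable two_ne_zero),
    dirDeriv_const_smul (differentiable_dirDeriv hf _), Pi.smul_apply, smul_eq_mul, mul_add,
    Finset.mul_sum]

lemma sumSqOp_sum {h : κ → F → ℝ} (hh : ∀ k, ContDiff ℝ 2 (h k)) :
    sumSqOp n X (∑ k, h k) = ∑ k, sumSqOp n X (h k) := by
  ext z
  simp only [sumSqOp, dirDeriv_sum fun k => (hh k).differentiable two_ne_zero,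
    dirDeriv_sum fun k => differentiable_dirDeriv (hh k) _, Finset.sum_apply,
    Finset.sum_add_distrib]
  rw [Finset.sum_comm]

lemma sumSqOp_mul_self (hf : ContDiff ℝ 2 f) (z : F) :
    sumSqOp n X (f * f) z = 2 * (f z * sumSqOp n X f z) + 2 * sumSqForm n f f z := by
  have hf₁ := hf.differentiable two_ne_zero
  have hsq (i : ι) : dirDeriv (n i) (dirDeriv (n i) (f * f)) z =
      2 * (f z * dirDeriv (n i) (dirDeriv (n i) f) z) +
        2 * (dirDeriv (n i) f z * dirDeriv (n i) f z) := by
    have hf₂ := differentiable_dirDeriv hf (n i)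
    rw [dirDeriv_mul hf₁ hf₁, dirDeriv_add (hf₁.mul hf₂) (hf₁.mul hf₂), dirDeriv_mul hf₁ hf₂]
    simp only [Pi.add_apply, Pi.mul_apply]
    ring
  have hdrift : dirDeriv (X z) (f * f) z = 2 * (f z * dirDeriv (X z) f z) := by
    rw [dirDeriv_mul hf₁ hf₁, two_mul]
    rfl
  simp only [sumSqOp, sumSqForm, hsq, hdrift, Finset.sum_add_distrib, ← Finset.mul_sum]
  ring

lemma hasFDerivAt_sumSqOp (hf : ContDiff ℝ 3 f) (hX : DifferentiableAt ℝ X z) :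
    HasFDerivAt (sumSqOp n X f)
      (∑ i, fderiv ℝ (dirDeriv (n i) (dirDeriv (n i) f)) z +
        ((fderiv ℝ f z).comp (fderiv ℝ X z) + (fderiv ℝ (fderiv ℝ f) z).flip (X z))) z := by
  have hdf : Differentiable ℝ (fderiv ℝ f) :=
    (hf.fderiv_right (m := 2) (by norm_num)).differentiable two_ne_zero
  have hdiff (i : ι) : DifferentiableAt ℝ (dirDeriv (n i) (dirDeriv (n i) f)) z :=
    differentiable_dirDeriv (contDiff_dirDeriv hf (by norm_num) _) _ z
  exact (HasFDerivAt.fun_sum fun i _ => (hdiff i).hasFDerivAt).add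
    ((hdf z).hasFDerivAt.clm_apply hX.hasFDerivAt)

lemma dirDeriv_sumSqOp (hf : ContDiff ℝ 3 f) (hX : DifferentiableAt ℝ X z) (w : F) :
    dirDeriv w (sumSqOp n X f) z =
      sumSqOp n X (dirDeriv w f) z + dirDeriv (fderiv ℝ X z w) f z := by
  have hf₂ : ContDiff ℝ 2 f := hf.of_le (by norm_num)
  have hcomm (i : ι) : dirDeriv w (dirDeriv (n i) (dirDeriv (n i) f)) =
      dirDeriv (n i) (dirDeriv (n i) (dirDeriv w f)) := by
    rw [dirDeriv_comm (contDiff_dirDeriv hf (by norm_num) _), dirDeriv_comm hf₂ w]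
  have hdrift : dirDeriv (X z) (dirDeriv w f) z = fderiv ℝ (fderiv ℝ f) z w (X z) := by
    rw [dirDeriv_comm hf₂, dirDeriv_dirDeriv hf₂]
  simp only [sumSqOp, ← hcomm, hdrift]
  rw [dirDeriv, (hasFDerivAt_sumSqOp hf hX).fderiv]
  simp only [dirDeriv, add_apply, sum_apply, ContinuousLinearMap.comp_apply,
    ContinuousLinearMap.flip_apply]
  ring

theorem sumSqOp_sumSqForm_sub (hf : ContDiff ℝ 3 f) (hX : DifferentiableAt ℝ X z) (w : κ → F) :
    sumSqOp n X (sumSqForm w f f) z - 2 * sumSqForm w f (sumSqOp n X f) z =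
      2 * ∑ k, sumSqForm n (dirDeriv (w k) f) (dirDeriv (w k) f) z -
        2 * ∑ k, dirDeriv (w k) f z * dirDeriv (fderiv ℝ X z (w k)) f z := by
  have hw (k : κ) : ContDiff ℝ 2 (dirDeriv (w k) f) := contDiff_dirDeriv hf (by norm_num) _
  have hsq (k : κ) : ContDiff ℝ 2 (dirDeriv (w k) f * dirDeriv (w k) f) := (hw k).mul (hw k)
  have hform : sumSqForm w f f = ∑ k, dirDeriv (w k) f * dirDeriv (w k) f := by
    ext z
    simp [sumSqForm]
  rw [hform, sumSqOp_sum hsq]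
  simp only [sumSqForm, Finset.sum_apply, sumSqOp_mul_self (hw _), dirDeriv_sumSqOp hf hX, mul_add,
    Finset.sum_add_distrib, ← Finset.mul_sum]
  ring

theorem sumSqOp_sumSqForm_sub_ge (hf : ContDiff ℝ 3 f) (hX : DifferentiableAt ℝ X z)
    (w : κ → F) (c : ℝ) :
    sumSqOp n X (sumSqForm w f f + c • (f * f)) z -
        2 * (sumSqForm w f (sumSqOp n X f) z + c * (f z * sumSqOp n X f z)) ≥
      2 * c * sumSqForm n f f z -
        2 * ∑ k, dirDeriv (w k) f z * dirDeriv (fderiv ℝ X z (w k)) f z := by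
  have hf₂ : ContDiff ℝ 2 f := hf.of_le (by norm_num)
  have hsq : ContDiff ℝ 2 (f * f) := hf₂.mul hf₂
  have hcsq : ContDiff ℝ 2 (c • (f * f)) := contDiff_const.smul hsq
  have hsecond : 0 ≤ ∑ k, sumSqForm n (dirDeriv (w k) f) (dirDeriv (w k) f) z :=
    Finset.sum_nonneg fun k _ => sumSqForm_self_nonneg n _ z
  have hform := sumSqOp_sumSqForm_sub (n := n) hf hX w
  rw [sumSqOp_add (contDiff_sumSqForm_self hf (by norm_num) w) hcsq, sumSqOp_const_smul hsq]
  simp only [Pi.add_apply, Pi.smul_apply, smul_eq_mul, sumSqOp_mul_self hf₂]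
  linarith

end SumOfSquares

section InnerProductSpace

variable {E : Type*} [NormedAddCommGroup E] [InnerProductSpace ℝ E]

lemma sum_inner_mul_inner_clm {ι G : Type*} [Fintype ι] [NormedAddCommGroup G]
    [InnerProductSpace ℝ G] (b : OrthonormalBasis ι ℝ E) (A : E →L[ℝ] G) (u : E) (r : G) :
    ∑ i, ⟪u, b i⟫ * ⟪r, A (b i)⟫ = ⟪r, A u⟫ := by
  conv_rhs => rw [← b.sum_repr' u]
  simp only [map_sum, map_smul, inner_sum, real_inner_smul_right, real_inner_comm u]

lemma sum_inner_mul_inner_right {ι : Type*} [Fintype ι] (b : OrthonormalBasis ι ℝ E) (u r : E) :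
    ∑ i, ⟪u, b i⟫ * ⟪r, b i⟫ = ⟪r, u⟫ :=
  sum_inner_mul_inner_clm b (.id ℝ E) u r

lemma third_mul_quadForm_le_of_opNorm_le {A : E →L[ℝ] E} {M : ℝ} (hA : ‖A‖ ≤ M) (p q : E) :
    1 / 3 * (2 * ‖p‖ ^ 2 - 2 * ⟪p, q⟫ + 2 * ‖q‖ ^ 2) ≤
      2 * (15 + 8 * M ^ 2 + 2 * M) * ‖q‖ ^ 2 -
        2 * (⟪q, p - q⟫ - ‖p - q‖ ^ 2 - ⟪q, A p⟫ - ⟪q, A (p - q)⟫) := by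
  have hAinner (u : E) : |⟪q, A u⟫| ≤ ‖q‖ * (M * ‖u‖) :=
    (abs_real_inner_le_norm _ _).trans <| by gcongr; exact A.le_of_opNorm_le hA u
  have hpq : ⟪p, q⟫ ≤ ‖p‖ * ‖q‖ := real_inner_le_norm p q
  have hAp : -(‖q‖ * (M * ‖p‖)) ≤ ⟪q, A p⟫ := (abs_le.1 (hAinner p)).1
  have hAq : ⟪q, A q⟫ ≤ ‖q‖ * (M * ‖q‖) := (abs_le.1 (hAinner q)).2
  have young_hess : 0 ≤ (‖p‖ - 4 * M * ‖q‖) ^ 2 := sq_nonneg _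
  have young_cross : 0 ≤ (‖p‖ - 4 * ‖q‖) ^ 2 := sq_nonneg _
  rw [norm_sub_sq_real, map_sub, inner_sub_right, inner_sub_right, real_inner_comm p q,
    real_inner_self_eq_norm_sq]
  nlinarith [young_hess, young_cross, sq_nonneg ‖p‖, sq_nonneg ‖q‖]

lemma differentiableAt_gradient [CompleteSpace E] {U : E → ℝ} {x : E}
    (hU : ContDiffAt ℝ 2 U x) : DifferentiableAt ℝ (gradient U) x :=
  (InnerProductSpace.toDual ℝ E).symm.toContinuousLinearEquiv.differentiableAt.comp x
    ((hU.fderiv_right (m := 1) (by norm_num)).differentiableAt one_ne_zero)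

end InnerProductSpace

section Slices

variable {E G : Type*} [NormedAddCommGroup E] [NormedSpace ℝ E] [NormedAddCommGroup G]
  [NormedSpace ℝ G] {f : E × G → ℝ} {z : E × G}

lemma fderiv_comp_prodMk_left (hf : DifferentiableAt ℝ f z) (a : E) :
    fderiv ℝ (fun x => f (x, z.2)) z.1 a = dirDeriv (a, 0) f z :=
  have hslice : HasFDerivAt (fun x => f (x, z.2))
      ((fderiv ℝ f z).comp (ContinuousLinearMap.inl ℝ E G)) z.1 :=
    hf.hasFDerivAt.comp z.1 (hasFDerivAt_prodMk_left z.1 z.2)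
  congrArg (· a) hslice.fderiv

lemma fderiv_comp_prodMk_right (hf : DifferentiableAt ℝ f z) (a : G) :
    fderiv ℝ (fun v => f (z.1, v)) z.2 a = dirDeriv (0, a) f z :=
  have hslice : HasFDerivAt (fun v => f (z.1, v))
      ((fderiv ℝ f z).comp (ContinuousLinearMap.inr ℝ E G)) z.2 :=
    hf.hasFDerivAt.comp z.2 (hasFDerivAt_prodMk_right z.1 z.2)
  congrArg (· a) hslice.fderiv

end Slices

section Generator

/-- Position–velocity pairs `(x, v)` in `ℝ^d × ℝ^d`. -/
abbrev PhaseSpace (d : ℕ) :=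
  EuclideanSpace ℝ (Fin d) × EuclideanSpace ℝ (Fin d)

variable {d : ℕ}

variable {U : EuclideanSpace ℝ (Fin d) → ℝ} {f g : PhaseSpace d → ℝ} {z : PhaseSpace d}

/-- The first-order part `(v, -v - ∇U(x))` of the kinetic Fokker–Planck generator, as a vector field
on phase space. -/
def kineticDrift (U : EuclideanSpace ℝ (Fin d) → ℝ) (z : PhaseSpace d) : PhaseSpace d :=
  (z.2, -z.2 - gradient U z.1)

/-- The coordinate fields `∂_{v_i}`, the diffusion directions of the generator. -/
def velocityDir (i : Fin d) : PhaseSpace d :=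
  (0, EuclideanSpace.basisFun (Fin d) ℝ i)

/-- The fields `∂_{x_i}`, `∂_{v_i}` and `∂_{x_i} - ∂_{v_i}`: the carré du champ is the sum of their
squares, because `2a² - 2ab + 2b² = a² + b² + (a - b)²`. -/
def carreDir : Fin d ⊕ Fin d ⊕ Fin d → PhaseSpace d :=
  let e := EuclideanSpace.basisFun (Fin d) ℝ
  Sum.elim (fun i => (e i, 0)) (Sum.elim (fun i => (0, e i)) (fun i => (e i, -e i)))

lemma dirDeriv_eq_inner (hf : DifferentiableAt ℝ f z) (w : PhaseSpace d) :
    dirDeriv w f z = ⟪gradx f z, w.1⟫ + ⟪gradv f z, w.2⟫ := by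
  rw [gradx, gradv, inner_gradient_left, inner_gradient_left, fderiv_comp_prodMk_left hf,
    fderiv_comp_prodMk_right hf, dirDeriv, dirDeriv, dirDeriv, ← map_add]
  simp

lemma lapv_eq_sum_dirDeriv (hf : ContDiff ℝ 2 f) (z : PhaseSpace d) :
    lapv f z = ∑ i, dirDeriv (velocityDir i) (dirDeriv (velocityDir i) f) z := by
  refine Finset.sum_congr rfl fun i _ => ?_
  have hinner : (fun v => fderiv ℝ (fun v' => f (z.1, v')) v (EuclideanSpace.single i 1)) =
      fun v => dirDeriv (velocityDir i) f (z.1, v) := by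
    ext v
    simpa [velocityDir] using
      fderiv_comp_prodMk_right (hf.differentiable two_ne_zero (z.1, v)) (EuclideanSpace.single i 1)
  rw [hinner, fderiv_comp_prodMk_right (differentiable_dirDeriv hf _ z), velocityDir,
    EuclideanSpace.basisFun_apply]

lemma genL_eq_sumSqOp (U : EuclideanSpace ℝ (Fin d) → ℝ) (hf : ContDiff ℝ 2 f) :
    genL U f = sumSqOp velocityDir (kineticDrift U) f := by
  ext z
  rw [genL, sumSqOp, lapv_eq_sum_dirDeriv hf,
    dirDeriv_eq_inner (hf.differentiable two_ne_zero z), kineticDrift, inner_sub_right,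
    inner_neg_right, real_inner_comm z.2, real_inner_comm z.2, real_inner_comm (gradient U z.1)]
  ring

lemma sumSqForm_velocityDir_self (hf : DifferentiableAt ℝ f z) :
    sumSqForm velocityDir f f z = ‖gradv f z‖ ^ 2 := by
  simp only [sumSqForm, dirDeriv_eq_inner hf, velocityDir, inner_zero_right, zero_add, ← pow_two]
  exact OrthonormalBasis.sum_sq_inner_left _ _

lemma carre_eq_sumSqForm (hf : DifferentiableAt ℝ f z) (hg : DifferentiableAt ℝ g z) :
    carre f g z = sumSqForm carreDir f g z := by
  simp only [sumSqForm, dirDeriv_eq_inner hf, dirDeriv_eq_inner hg, carreDir,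
    Fintype.sum_sum_type, Sum.elim_inl, Sum.elim_inr, inner_zero_right, add_zero, zero_add,
    inner_neg_right, ← sub_eq_add_neg, ← inner_sub_left, sum_inner_mul_inner_right]
  simp only [carre, inner_sub_left, inner_sub_right, real_inner_comm]
  ring

lemma carreT_eq_sumSqForm (M : ℝ) (hf : DifferentiableAt ℝ f z) (hg : DifferentiableAt ℝ g z) :
    carreT M f g z = sumSqForm carreDir f g z + (15 + 8 * M ^ 2 + 2 * M) * (f z * g z) := by
  rw [carreT, carre_eq_sumSqForm hf hg]

lemma hasFDerivAt_kineticDrift (hU : DifferentiableAt ℝ (gradient U) z.1) :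
    HasFDerivAt (kineticDrift U) ((ContinuousLinearMap.snd ℝ _ _).prod
      (-ContinuousLinearMap.snd ℝ _ _ -
        (fderiv ℝ (gradient U) z.1).comp (ContinuousLinearMap.fst ℝ _ _))) z :=
  hasFDerivAt_snd.prodMk (hasFDerivAt_snd.neg.sub (hU.hasFDerivAt.comp z hasFDerivAt_fst))

lemma dirDeriv_fderiv_kineticDrift (hU : DifferentiableAt ℝ (gradient U) z.1)
    (hf : DifferentiableAt ℝ f z) (w : PhaseSpace d) :
    dirDeriv (fderiv ℝ (kineticDrift U) z w) f z =
      ⟪gradx f z - gradv f z, w.2⟫ - ⟪gradv f z, fderiv ℝ (gradient U) z.1 w.1⟫ := by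
  rw [dirDeriv_eq_inner hf, (hasFDerivAt_kineticDrift hU).fderiv]
  change ⟪gradx f z, w.2⟫ + ⟪gradv f z, -w.2 - fderiv ℝ (gradient U) z.1 w.1⟫ = _
  rw [inner_sub_right, inner_neg_right, inner_sub_left]
  ring

lemma sum_dirDeriv_carreDir_mul_commutator (hU : DifferentiableAt ℝ (gradient U) z.1)
    (hf : DifferentiableAt ℝ f z) :
    ∑ k, dirDeriv (carreDir k) f z * dirDeriv (fderiv ℝ (kineticDrift U) z (carreDir k)) f z =
      ⟪gradv f z, gradx f z - gradv f z⟫ - ‖gradx f z - gradv f z‖ ^ 2 -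
        ⟪gradv f z, fderiv ℝ (gradient U) z.1 (gradx f z)⟫ -
        ⟪gradv f z, fderiv ℝ (gradient U) z.1 (gradx f z - gradv f z)⟫ := by
  simp only [dirDeriv_fderiv_kineticDrift hU hf, dirDeriv_eq_inner hf, carreDir,
    Fintype.sum_sum_type, Sum.elim_inl, Sum.elim_inr, inner_zero_right, map_zero, add_zero,
    zero_add, inner_neg_right, ← sub_eq_add_neg, ← inner_sub_left, mul_neg, mul_zero, mul_sub,
    Finset.sum_const_zero, Finset.sum_sub_distrib, Finset.sum_neg_distrib,
    sum_inner_mul_inner_clm, sum_inner_mul_inner_right, real_inner_self_eq_norm_sq]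
  rw [real_inner_comm]
  ring

theorem genL_carreT_sub_ge (M : ℝ) (hU : DifferentiableAt ℝ (gradient U) z.1)
    (hf : ContDiff ℝ 3 f) :
    genL U (carreT M f f) z - 2 * carreT M f (genL U f) z ≥
      2 * (15 + 8 * M ^ 2 + 2 * M) * ‖gradv f z‖ ^ 2 -
        2 * (⟪gradv f z, gradx f z - gradv f z⟫ - ‖gradx f z - gradv f z‖ ^ 2 -
          ⟪gradv f z, fderiv ℝ (gradient U) z.1 (gradx f z)⟫ -
          ⟪gradv f z, fderiv ℝ (gradient U) z.1 (gradx f z - gradv f z)⟫) := by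
  have hf₁ : Differentiable ℝ f := hf.differentiable three_ne_zero
  have hf₂ : ContDiff ℝ 2 f := hf.of_le (by norm_num)
  have hX : DifferentiableAt ℝ (kineticDrift U) z := (hasFDerivAt_kineticDrift hU).differentiableAt
  have hcarreT : carreT M f f = sumSqForm carreDir f f + (15 + 8 * M ^ 2 + 2 * M) • (f * f) := by
    ext y
    exact carreT_eq_sumSqForm M (hf₁ y) (hf₁ y)
  have hcarreT₂ : ContDiff ℝ 2 (carreT M f f) := by
    rw [hcarreT]
    exact (contDiff_sumSqForm_self hf (by norm_num) _).add (contDiff_const.smul (hf₂.mul hf₂))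
  rw [genL_eq_sumSqOp U hcarreT₂, genL_eq_sumSqOp U hf₂,
    carreT_eq_sumSqForm M (hf₁ z) (hasFDerivAt_sumSqOp hf hX).differentiableAt, hcarreT,
    ← sumSqForm_velocityDir_self (hf₁ z), ← sum_dirDeriv_carreDir_mul_commutator hU (hf₁ z)]
  exact sumSqOp_sumSqForm_sub_ge hf hX carreDir _

lemma carre_self (f : PhaseSpace d → ℝ) (z : PhaseSpace d) :
    carre f f z = 2 * ‖gradx f z‖ ^ 2 - 2 * ⟪gradx f z, gradv f z⟫ + 2 * ‖gradv f z‖ ^ 2 := by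
  rw [carre, real_inner_comm (gradx f z) (gradv f z), real_inner_self_eq_norm_sq,
    real_inner_self_eq_norm_sq]
  ring

end Generator

end KineticFokkerPlanck

theorem carreT_gamma2_lower_bound_general {d : ℕ} {U : EuclideanSpace ℝ (Fin d) → ℝ} {M : ℝ}
    {f : EuclideanSpace ℝ (Fin d) × EuclideanSpace ℝ (Fin d) → ℝ}
    {z : EuclideanSpace ℝ (Fin d) × EuclideanSpace ℝ (Fin d)} (hU : ContDiffAt ℝ 2 U z.1)
    (hHess : ‖fderiv ℝ (gradient U) z.1‖ ≤ M) (hf : ContDiff ℝ 3 f) :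
    genL U (carreT M f f) z - 2 * carreT M f (genL U f) z ≥
      (1 / 3) * (carreT M f f z - (15 + 8 * M ^ 2 + 2 * M) * (f z) ^ 2) := by
  have hcarre : carreT M f f z - (15 + 8 * M ^ 2 + 2 * M) * (f z) ^ 2 = carre f f z := by
    rw [carreT, pow_two (f z), add_sub_cancel_right]
  rw [hcarre, KineticFokkerPlanck.carre_self]
  exact (KineticFokkerPlanck.genL_carreT_sub_ge M
    (KineticFokkerPlanck.differentiableAt_gradient hU) hf).trans'
      (KineticFokkerPlanck.third_mul_quadForm_le_of_opNorm_le hHess _ _)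

/-- with `C_M = 15 + 8M² + 2M` and `Γ̃(f,g) = Γ(f,g) + C_M f g`, for every smooth
`f` one has the pointwise inequality `L Γ̃(f) − 2 Γ̃(f, L f) ≥ (1/3)(Γ̃(f) − C_M f²)`. -/
theorem carreT_gamma2_lower_bound {d : ℕ} (hd : 1 ≤ d)
    (U : EuclideanSpace ℝ (Fin d) → ℝ) (hU : ContDiff ℝ (⊤ : ℕ∞) U)
    (M : ℝ) (hM : 0 < M)
    (hHess : ∀ x : EuclideanSpace ℝ (Fin d), ‖fderiv ℝ (gradient U) x‖ ≤ M)
    (f : EuclideanSpace ℝ (Fin d) × EuclideanSpace ℝ (Fin d) → ℝ)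
    (hf : ContDiff ℝ (⊤ : ℕ∞) f)
    (z : EuclideanSpace ℝ (Fin d) × EuclideanSpace ℝ (Fin d)) :
    genL U (carreT M f f) z - 2 * carreT M f (genL U f) z ≥
      (1 / 3) * (carreT M f f z - (15 + 8 * M ^ 2 + 2 * M) * (f z) ^ 2) := by
  exact carreT_gamma2_lower_bound_general (hU.contDiffAt.of_le ENat.LEInfty.out)
    (hHess z.1) (hf.of_le ENat.LEInfty.out)

end
end

section
/- Let z ∈ ℝ^n and 0 < R < ‖z‖. Then every C¹ path γ : [0,1] → ℝ^n with γ(0) = z and ‖γ(1)‖ ≤ R satisfies ∫₀¹ L(γ(t)) ‖γ'(t)‖ dt ≥ C ∫_R^{‖z‖} e^{m r²} dr. In particular the ρ_L-distance from z to the closed ball of radius R centred at the origin is at least C ∫_R^{‖z‖} e^{m r²} dr. -/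
noncomputable section

/-- The weighted path metric `ρ_L(z₁, z₂)`: the infimum over all `C¹` paths
`γ : [0,1] → ℝ^n` from `z₁` to `z₂` of `∫₀¹ L(γ(t)) ‖γ'(t)‖ dt`. -/
def rho {n : ℕ} (L : EuclideanSpace ℝ (Fin n) → ℝ)
    (z₁ z₂ : EuclideanSpace ℝ (Fin n)) : ℝ :=
  sInf { c : ℝ | ∃ γ : ℝ → EuclideanSpace ℝ (Fin n),
    ContDiff ℝ 1 γ ∧ γ 0 = z₁ ∧ γ 1 = z₂ ∧
    c = ∫ t in (0:ℝ)..1, L (γ t) * ‖deriv γ t‖ }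

/-!
If `u` is `1`-Lipschitz and `γ` is `C¹`, then `t ↦ u (γ t)` changes at speed at most `‖γ'(t)‖`.
Hence, for a primitive `G` of a weight `h ≥ 0` with `h ∘ u ≤ L`, the function `G ∘ u ∘ γ` changes at
speed at most `L(γ(t)) ‖γ'(t)‖`, and integrating bounds the weighted length of `γ` from below.
For `u = ‖·‖` the composite need not be differentiable where `γ` meets the origin; being locally
Lipschitz, it is absolutely continuous, which suffices for the fundamental theorem of calculus.
-/

open MeasureTheory Set NNReal

theorem absolutelyContinuousOnInterval_of_locallyLipschitz {X : Type*} [PseudoMetricSpace X]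
    {f : ℝ → X} (hf : LocallyLipschitz f) (a b : ℝ) : AbsolutelyContinuousOnInterval f a b := by
  obtain ⟨K, hK⟩ :=
    (hf.locallyLipschitzOn (s := uIcc a b)).exists_lipschitzOnWith_of_compact isCompact_uIcc
  exact hK.absolutelyContinuousOnInterval

theorem norm_sub_le_integral_of_ae_norm_deriv_le {f B : ℝ → ℝ} {a b : ℝ} (hab : a ≤ b)
    (hf : AbsolutelyContinuousOnInterval f a b)
    (hfB : ∀ᵐ t, t ∈ Ioc a b → ‖deriv f t‖ ≤ B t) (hB : IntervalIntegrable B volume a b) :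
    ‖f b - f a‖ ≤ ∫ t in a..b, B t := by
  rw [← hf.integral_deriv_eq_sub]
  exact intervalIntegral.norm_integral_le_of_norm_le hab hfB hB

section NormedSpace

variable {E : Type*} [NormedAddCommGroup E] [NormedSpace ℝ E]

theorem norm_deriv_lipschitz_comp_le {F : Type*} [NormedAddCommGroup F] [NormedSpace ℝ F]
    {K : ℝ≥0} {u : E → F} (hu : LipschitzWith K u) {γ : ℝ → E} {t : ℝ}
    (hγ : DifferentiableAt ℝ γ t) : ‖deriv (u ∘ γ) t‖ ≤ K * ‖deriv γ t‖ := by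
  by_cases huγ : DifferentiableAt ℝ (u ∘ γ) t
  · have slope_le (s : ℝ) : ‖slope (u ∘ γ) t s‖ ≤ K * ‖slope γ t s‖ := by
      simp only [slope_def_module, norm_smul, Function.comp_apply]
      rw [mul_left_comm]
      gcongr
      exact hu.norm_sub_le _ _
    exact le_of_tendsto_of_tendsto' huγ.hasDerivAt.tendsto_slope.norm
      (hγ.hasDerivAt.tendsto_slope.norm.const_mul _) slope_le
  · rw [deriv_zero_of_not_differentiableAt huγ, norm_zero]
    positivity

/-- The length `∫ L(γ(t)) ‖γ'(t)‖ dt` of the path `γ` over `[a, b]` in the conformal metric with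
density `L`. -/
def weightedLength (L : E → ℝ) (γ : ℝ → E) (a b : ℝ) : ℝ :=
  ∫ t in a..b, L (γ t) * ‖deriv γ t‖

/-- The path metric with density `L`: the infimum of the weighted lengths over `[0, 1]` of `C¹`
paths from `z` to `w`. It extends `rho` to arbitrary real normed spaces; as there, paths are defined
and `C¹` on all of `ℝ`. -/
def weightedDist (L : E → ℝ) (z w : E) : ℝ :=
  sInf {c | ∃ γ : ℝ → E, ContDiff ℝ 1 γ ∧ γ 0 = z ∧ γ 1 = w ∧ c = weightedLength L γ 0 1}

theorem le_weightedDist {L : E → ℝ} {z w : E} {c : ℝ}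
    (hc : ∀ γ : ℝ → E, ContDiff ℝ 1 γ → γ 0 = z → γ 1 = w → c ≤ weightedLength L γ 0 1) :
    c ≤ weightedDist L z w := by
  refine le_csInf ⟨_, fun t => z + t • (w - z), by fun_prop, by simp, by simp, rfl⟩ ?_
  rintro _ ⟨γ, hγ, hz, hw, rfl⟩
  exact hc γ hγ hz hw

variable {u : E → ℝ} {h : ℝ → ℝ} {L : E → ℝ}

theorem abs_integral_le_weightedLength (hu : LipschitzWith 1 u) (hh : Continuous h)
    (h_nonneg : ∀ r, 0 ≤ h r) (hL : Continuous L) (hhL : ∀ x, h (u x) ≤ L x)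
    {γ : ℝ → E} (hγ : ContDiff ℝ 1 γ) {a b : ℝ} (hab : a ≤ b) :
    |∫ r in u (γ a)..u (γ b), h r| ≤ weightedLength L γ a b := by
  let G : ℝ → ℝ := fun s => ∫ r in u (γ a)..s, h r
  have hG (s : ℝ) : HasDerivAt G (h s) s := (hh.integral_hasStrictDerivAt _ s).hasDerivAt
  have hG_contDiff : ContDiff ℝ 1 G :=
    contDiff_one_iff_deriv.2 ⟨fun s => (hG s).differentiableAt, by rwa [deriv_eq hG]⟩
  have huγ : LocallyLipschitz (u ∘ γ) := hu.locallyLipschitz.comp hγ.locallyLipschitz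
  have huγ_ac := absolutelyContinuousOnInterval_of_locallyLipschitz huγ a b
  have deriv_le : ∀ᵐ t, t ∈ Ioc a b → ‖deriv (G ∘ u ∘ γ) t‖ ≤ L (γ t) * ‖deriv γ t‖ := by
    filter_upwards [huγ_ac.ae_differentiableAt] with t ht ht_mem
    have huγ_t := (ht (Icc_subset_uIcc (Ioc_subset_Icc_self ht_mem))).hasDerivAt
    have speed_le : ‖deriv (u ∘ γ) t‖ ≤ ‖deriv γ t‖ := by
      simpa using norm_deriv_lipschitz_comp_le hu (hγ.differentiable one_ne_zero t)
    calc ‖deriv (G ∘ u ∘ γ) t‖ = h (u (γ t)) * ‖deriv (u ∘ γ) t‖ := by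
          rw [((hG _).comp t huγ_t).deriv, norm_mul, Real.norm_of_nonneg (h_nonneg _)]; rfl
      _ ≤ L (γ t) * ‖deriv γ t‖ :=
          mul_le_mul (hhL _) speed_le (norm_nonneg _) ((h_nonneg _).trans (hhL _))
  have integrand_continuous : Continuous fun t => L (γ t) * ‖deriv γ t‖ :=
    (hL.comp hγ.continuous).mul (hγ.continuous_deriv le_rfl).norm
  simpa [G] using! norm_sub_le_integral_of_ae_norm_deriv_le hab
    (absolutelyContinuousOnInterval_of_locallyLipschitz (hG_contDiff.locallyLipschitz.comp huγ) a b)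
    deriv_le (integrand_continuous.intervalIntegrable a b)

theorem integral_le_weightedLength_of_le (hu : LipschitzWith 1 u) (hh : Continuous h)
    (h_nonneg : ∀ r, 0 ≤ h r) (hL : Continuous L) (hhL : ∀ x, h (u x) ≤ L x)
    {γ : ℝ → E} (hγ : ContDiff ℝ 1 γ) {a b R : ℝ} (hab : a ≤ b) (hR : u (γ b) ≤ R) :
    ∫ r in R..u (γ a), h r ≤ weightedLength L γ a b :=
  calc ∫ r in R..u (γ a), h r
      ≤ (∫ r in u (γ b)..R, h r) + ∫ r in R..u (γ a), h r :=
        le_add_of_nonneg_left (intervalIntegral.integral_nonneg hR fun r _ => h_nonneg r)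
    _ = ∫ r in u (γ b)..u (γ a), h r :=
        intervalIntegral.integral_add_adjacent_intervals (hh.intervalIntegrable _ _)
          (hh.intervalIntegrable _ _)
    _ ≤ |∫ r in u (γ a)..u (γ b), h r| := by
        rw [intervalIntegral.integral_symm]
        exact neg_le_abs _
    _ ≤ weightedLength L γ a b := abs_integral_le_weightedLength hu hh h_nonneg hL hhL hγ hab

theorem rho_dist_to_ball_lower_bound_general (hu : LipschitzWith 1 u) (hh : Continuous h)
    (h_nonneg : ∀ r, 0 ≤ h r) (hL : Continuous L) (hhL : ∀ x, h (u x) ≤ L x) (z : E) (R : ℝ) :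
    (∀ γ : ℝ → E, ContDiff ℝ 1 γ → γ 0 = z → u (γ 1) ≤ R →
        ∫ r in R..u z, h r ≤ weightedLength L γ 0 1) ∧
      (∀ w : E, u w ≤ R → ∫ r in R..u z, h r ≤ weightedDist L z w) := by
  have length_bound : ∀ γ : ℝ → E, ContDiff ℝ 1 γ → γ 0 = z → u (γ 1) ≤ R →
      ∫ r in R..u z, h r ≤ weightedLength L γ 0 1 := by
    rintro γ hγ rfl hR
    exact integral_le_weightedLength_of_le hu hh h_nonneg hL hhL hγ zero_le_one hR
  refine ⟨length_bound, fun w hw => le_weightedDist fun γ hγ hz hγw => ?_⟩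
  exact length_bound γ hγ hz (hγw ▸ hw)

end NormedSpace

/-- if `L(z) ≥ C e^{m‖z‖²}`, `0 < R < ‖z‖`, then every `C¹` path from `z` to the
closed ball of radius `R` has weighted length at least `C ∫_R^{‖z‖} e^{m r²} dr`; in particular
the `ρ_L`-distance from `z` to that ball is at least `C ∫_R^{‖z‖} e^{m r²} dr`. -/
theorem rho_dist_to_ball_lower_bound {n : ℕ} (hn : 1 ≤ n)
    (L : EuclideanSpace ℝ (Fin n) → ℝ) (hLcont : Continuous L)
    (hL1 : ∀ z, 1 ≤ L z)
    (C m : ℝ) (hC : 0 < C) (hm : 0 < m)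
    (hLlow : ∀ z, C * Real.exp (m * ‖z‖ ^ 2) ≤ L z)
    (z : EuclideanSpace ℝ (Fin n)) (R : ℝ) (hR : 0 < R) (hRz : R < ‖z‖) :
    (∀ γ : ℝ → EuclideanSpace ℝ (Fin n), ContDiff ℝ 1 γ → γ 0 = z → ‖γ 1‖ ≤ R →
        C * (∫ r in R..‖z‖, Real.exp (m * r ^ 2)) ≤
          ∫ t in (0:ℝ)..1, L (γ t) * ‖deriv γ t‖) ∧
      (∀ w : EuclideanSpace ℝ (Fin n), ‖w‖ ≤ R →
        C * (∫ r in R..‖z‖, Real.exp (m * r ^ 2)) ≤ rho L z w) := by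
  rw [← intervalIntegral.integral_const_mul]
  exact rho_dist_to_ball_lower_bound_general (h := fun r => C * Real.exp (m * r ^ 2))
    lipschitzWith_one_norm (by fun_prop) (fun r => by positivity) hLcont hLlow z R

end
end
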